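/- If M = [[a₁,a₂,a₃],[b₁,b₂,b₃],[c₁,c₂,c₃]] is a reduced magic square of order 3 with c₃ = r and b₂ = s, then M = [[2s−r, 0, s+r],[2r, s, 2s−2r],[s−r, 2s, r]]. -/

import Mathlib

open Matrix Finset

/-- `IsMagic M m` : every row sum, column sum, and both diagonal sums of the
3×3 matrix `M` of nonnegative integers equal `m`, and all entries are distinct. -/
def IsMagic (M : Matrix (Fin 3) (Fin 3) ℕ) (m : ℕ) : Prop :=
  (Function.Injective fun p : Fin 3 × Fin 3 => M p.1 p.2) ∧
  (∀ i, ∑ j, M i j = m) ∧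
  (∀ j, ∑ i, M i j = m) ∧
  (∑ i, M i i = m) ∧
  (∑ i, M i i.rev = m)

/-- A magic square of order 3. -/
def IsMagicSquare (M : Matrix (Fin 3) (Fin 3) ℕ) : Prop := ∃ m, IsMagic M m


/-- A reduced magic square of order 3: a magic square one of whose entries
is 0, and with `c₃ < a₁`, `c₃ < a₃`, `c₃ < c₁`, `c₁ < a₃`. -/
def IsReducedMagic (M : Matrix (Fin 3) (Fin 3) ℕ) : Prop :=
  IsMagicSquare M ∧ (∃ i j, M i j = 0) ∧
  M 2 2 < M 0 0 ∧ M 2 2 < M 0 2 ∧ M 2 2 < M 2 0 ∧ M 2 0 < M 0 2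

/-!
Lucas' normal form writes every magic square of order 3 as its central entry `s` plus
`[[x, -(x + y), y], [y - x, 0, x - y], [-y, x + y, -x]]`. The inequalities `c₃ ≤ a₁` and `c₁ ≤ a₃`
say that `x` and `y` are nonnegative, so the least entry is `s - (x + y)`, in the middle of the top
row. Hence this is the entry 0, that is, `s = x + y`, and then `r = s - x = y`.
-/

/-- The order-`n` matrix `M` has magic number `m`: all rows, all columns and both diagonals sum to
`m`. Unlike in `IsMagic`, entries may repeat and lie in any additive monoid, so that a square of
natural numbers can be transported to `ℤ`. -/
structure HasMagicSum {R : Type*} [AddCommMonoid R] {n : ℕ} (M : Matrix (Fin n) (Fin n) R) (m : R) :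
    Prop where
  row : ∀ i, ∑ j, M i j = m
  col : ∀ j, ∑ i, M i j = m
  diag : ∑ i, M i i = m
  antidiag : ∑ i, M i i.rev = m

theorem IsMagic.hasMagicSum {M : Matrix (Fin 3) (Fin 3) ℕ} {m : ℕ} (h : IsMagic M m) :
    HasMagicSum M m :=
  ⟨h.2.1, h.2.2.1, h.2.2.2.1, h.2.2.2.2⟩

theorem HasMagicSum.map {R S : Type*} [AddCommMonoid R] [AddCommMonoid S] {n : ℕ}
    {M : Matrix (Fin n) (Fin n) R} {m : R} (h : HasMagicSum M m) (f : R →+ S) :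
    HasMagicSum (M.map f) (f m) where
  row i := by simp only [map_apply, ← map_sum, h.row]
  col j := by simp only [map_apply, ← map_sum, h.col]
  diag := by simp only [map_apply, ← map_sum, h.diag]
  antidiag := by simp only [map_apply, ← map_sum, h.antidiag]

namespace HasMagicSum

section AddCommMonoid

variable {R : Type*} [AddCommMonoid R] {M : Matrix (Fin 3) (Fin 3) R} {m : R}

theorem row_fin_three (h : HasMagicSum M m) (i : Fin 3) : M i 0 + M i 1 + M i 2 = m :=
  (Fin.sum_univ_three _).symm.trans (h.row i)

theorem col_fin_three (h : HasMagicSum M m) (j : Fin 3) : M 0 j + M 1 j + M 2 j = m :=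
  (Fin.sum_univ_three _).symm.trans (h.col j)

theorem diag_fin_three (h : HasMagicSum M m) : M 0 0 + M 1 1 + M 2 2 = m :=
  (Fin.sum_univ_three _).symm.trans h.diag

theorem antidiag_fin_three (h : HasMagicSum M m) : M 0 2 + M 1 1 + M 2 0 = m :=
  (Fin.sum_univ_three _).symm.trans h.antidiag

end AddCommMonoid

/-- Three of the lines through the centre cover the top and bottom rows once and the centre three
times. -/
theorem eq_three_nsmul_center {R : Type*} [AddCommGroup R] {M : Matrix (Fin 3) (Fin 3) R} {m : R}
    (h : HasMagicSum M m) : m = 3 • M 1 1 :=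
  calc
    m = m + m + m - m - m := by abel
    _ = (M 0 0 + M 1 1 + M 2 2) + (M 0 2 + M 1 1 + M 2 0) + (M 0 1 + M 1 1 + M 2 1)
          - (M 0 0 + M 0 1 + M 0 2) - (M 2 0 + M 2 1 + M 2 2) := by
      rw [h.diag_fin_three, h.antidiag_fin_three, h.col_fin_three, h.row_fin_three,
        h.row_fin_three]
    _ = 3 • M 1 1 := by abel

end HasMagicSum

section AddCommGroup

variable {R : Type*} [AddCommGroup R]

/-- Lucas' normal form of a magic square of order 3: `s` is the central entry, and `x` and `y` are
the excesses over `s` of the left and right corners in the top row. It solves the linear system of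
the eight line sums. -/
def lucasSquare (s x y : R) : Matrix (Fin 3) (Fin 3) R :=
  !![s + x, s - (x + y), s + y;
     s - x + y, s, s + x - y;
     s - y, s + (x + y), s - x]

theorem HasMagicSum.eq_lucasSquare {M : Matrix (Fin 3) (Fin 3) R} {m : R} (h : HasMagicSum M m) :
    M = lucasSquare (M 1 1) (M 1 1 - M 2 2) (M 0 2 - M 1 1) := by
  have center := h.eq_three_nsmul_center
  have top_left : M 0 0 = M 1 1 + (M 1 1 - M 2 2) := by grind [h.diag_fin_three]
  have bottom_left : M 2 0 = M 1 1 - (M 0 2 - M 1 1) := by grind [h.antidiag_fin_three]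
  have top_middle : M 0 1 = M 1 1 - (M 1 1 - M 2 2 + (M 0 2 - M 1 1)) := by
    grind [h.row_fin_three 0]
  have bottom_middle : M 2 1 = M 1 1 + (M 1 1 - M 2 2 + (M 0 2 - M 1 1)) := by
    grind [h.row_fin_three 2]
  have middle_left : M 1 0 = M 1 1 - (M 1 1 - M 2 2) + (M 0 2 - M 1 1) := by
    grind [h.col_fin_three 0]
  have middle_right : M 1 2 = M 1 1 + (M 1 1 - M 2 2) - (M 0 2 - M 1 1) := by
    grind [h.col_fin_three 2]
  rw [lucasSquare, ← middle_left, ← middle_right, ← top_left, ← top_middle, ← bottom_left,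
    ← bottom_middle, add_sub_cancel, sub_sub_cancel]
  exact eta_fin_three M

/-- The coefficients of `x` and of `y` form a pair of orthogonal Latin squares. -/
theorem lucasSquare_apply (s x y : R) (i j : Fin 3) :
    lucasSquare s x y i j = s - (x + y) +
      ((!![2, 0, 1; 0, 1, 2; 1, 2, 0] : Matrix (Fin 3) (Fin 3) ℕ) i j • x +
        (!![1, 0, 2; 2, 1, 0; 0, 2, 1] : Matrix (Fin 3) (Fin 3) ℕ) i j • y) := by
  fin_cases i <;> fin_cases j <;>
    simp only [lucasSquare, Fin.reduceFinMk, Fin.zero_eta, Fin.mk_one, of_apply,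
      Matrix.cons_val] <;>
    abel

theorem lucasSquare_sub_left (s r : R) :
    lucasSquare s (s - r) r =
      !![2 • s - r, 0, s + r;
         2 • r, s, 2 • s - 2 • r;
         s - r, 2 • s, r] := by
  have top_left : s + (s - r) = 2 • s - r := by abel
  have top_middle : s - (s - r + r) = 0 := by abel
  have middle_left : s - (s - r) + r = 2 • r := by abel
  have middle_right : s + (s - r) - r = 2 • s - 2 • r := by abel
  have bottom_middle : s + (s - r + r) = 2 • s := by abel
  rw [lucasSquare, top_middle, middle_left, middle_right, top_left, bottom_middle, sub_sub_cancel]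

theorem lucasSquare_zero_one_le [PartialOrder R] [IsOrderedAddMonoid R] {x y : R} (hx : 0 ≤ x)
    (hy : 0 ≤ y) (s : R) (i j : Fin 3) : lucasSquare s x y 0 1 ≤ lucasSquare s x y i j := by
  rw [lucasSquare_apply s x y i j]
  exact le_add_of_nonneg_right (add_nonneg (nsmul_nonneg hx _) (nsmul_nonneg hy _))

theorem eq_add_of_lucasSquare_eq_zero [PartialOrder R] [IsOrderedAddMonoid R] {s x y : R}
    (hx : 0 ≤ x) (hy : 0 ≤ y) (hnonneg : 0 ≤ lucasSquare s x y 0 1) {i j : Fin 3}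
    (hzero : lucasSquare s x y i j = 0) : s = x + y := by
  have hle : lucasSquare s x y 0 1 ≤ 0 := (lucasSquare_zero_one_le hx hy s i j).trans_eq hzero
  exact sub_eq_zero.mp (hle.antisymm hnonneg)

theorem reduced_magic_square_entries_general [LinearOrder R] [IsOrderedAddMonoid R]
    {M : Matrix (Fin 3) (Fin 3) R} {m : R} (h : HasMagicSum M m) (hnonneg : ∀ i j, 0 ≤ M i j)
    (hzero : ∃ i j, M i j = 0) (hdiag : M 2 2 ≤ M 0 0) (hantidiag : M 2 0 ≤ M 0 2) {r s : R}
    (hr : M 2 2 = r) (hs : M 1 1 = s) :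
    M =
      !![2 • s - r, 0, s + r;
         2 • r, s, 2 • s - 2 • r;
         s - r, 2 • s, r] := by
  obtain ⟨x, y, rfl⟩ : ∃ x y, M = lucasSquare s x y := ⟨_, _, hs ▸ h.eq_lucasSquare⟩
  have hx : 0 ≤ x := by
    have : s - x ≤ s + x := hdiag
    grind
  have hy : 0 ≤ y := by
    have : s - y ≤ s + y := hantidiag
    grind
  obtain ⟨i, j, hij⟩ := hzero
  have hsum : s = x + y := eq_add_of_lucasSquare_eq_zero hx hy (hnonneg 0 1) hij
  have hxr : x = s - r := by rw [← hr]; exact (sub_sub_cancel s x).symm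
  have hyr : y = r := by grind
  rw [hxr, hyr, lucasSquare_sub_left]

end AddCommGroup

/-- A reduced magic square with `c₃ = r` and `b₂ = s` is completely determined:
it equals `[[2s−r, 0, s+r], [2r, s, 2s−2r], [s−r, 2s, r]]`. -/
theorem reduced_magic_square_entries (M : Matrix (Fin 3) (Fin 3) ℕ)
    (h : IsReducedMagic M) (r s : ℕ) (hr : M 2 2 = r) (hs : M 1 1 = s) :
    M.map (Nat.cast : ℕ → ℤ) =
      !![2 * (s : ℤ) - r, 0, (s : ℤ) + r;
         2 * (r : ℤ), (s : ℤ), 2 * (s : ℤ) - 2 * r;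
         (s : ℤ) - r, 2 * (s : ℤ), (r : ℤ)] := by
  obtain ⟨⟨m, hm⟩, ⟨i, j, hij⟩, hdiag, -, -, hantidiag⟩ := h
  simpa using reduced_magic_square_entries_general (hm.hasMagicSum.map (Nat.castAddMonoidHom ℤ))
    (fun _ _ ↦ by simp) ⟨i, j, by simp [hij]⟩ (by simpa using hdiag.le)
    (by simpa using hantidiag.le) (congrArg Nat.cast hr) (congrArg Nat.cast hs)
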